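/- Let n ≥ 2, m = ⌊n/2⌋, and fix integers k, d with 1 ≤ k ≤ m and d ≥ 1, and 0 ≤ l ≤ k−1. Let z ∈ P(m) satisfy z_1 = z_2 = ... = z_{l+1}, and let t = (t_1,...,t_{n−2l}) be an integer sequence. Define y to be the sequence (z_{l+1}, z_{l+1}, z_{l+2}, z_{l+2}, ..., z_m, z_m) of length 2(m−l), padded with a final zero to length n−2l when n is odd, and let u_i = 2t_i for all i. Then: (z,l) ∈ Z_k^d and t ∈ T_l(z) if and only if (y,u) ∈ YU(2l, k, n, d); and when these equivalent conditions hold, g_{2l,k,n,d}(y,u) = Σ_{i=l+1}^{m} z_i + l(z_1 − 1) + |t| − f_l(z,t). -/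

import Mathlib

/-- `IsPart k y`: `y` encodes a partition with at most `k` parts (1-indexed),
with `y i = 0` for `i = 0` and for `i > k`. -/
def IsPart (k : ℕ) (y : ℕ → ℤ) : Prop :=
  (∀ i, 1 ≤ i → i < k → y (i + 1) ≤ y i) ∧
  (∀ i, 1 ≤ i → i ≤ k → 0 ≤ y i) ∧
  (∀ i, i = 0 ∨ k < i → y i = 0)

/-- `IsPartE k y`: `y` belongs to `P_e(k)`: a partition with at most `k` parts,
with `y_{2i} = y_{2i-1}` for `1 ≤ i ≤ ⌊k/2⌋`, and `y_k = 0` if `k` is odd. -/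
def IsPartE (k : ℕ) (y : ℕ → ℤ) : Prop :=
  IsPart k y ∧ (∀ i, 1 ≤ i → 2 * i ≤ k → y (2 * i) = y (2 * i - 1)) ∧ (Odd k → y k = 0)

/-- The size `|y|` of a partition with at most `k` parts. -/
def psize (k : ℕ) (y : ℕ → ℤ) : ℤ := ∑ i ∈ Finset.Icc 1 k, y i

/-- The set `𝒴𝒰(q,k,n,d)` of pairs of partitions `(y,u) ∈ P_e(n-q) × P(n-q)` with
`|y| ≤ d(2k-q)-2`, `|y| - 2y₁ ≥ d(2k-q-2)`, all `u_i` even, `u₁ = q`, and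
`y_i - y_{i+1} ≥ u_i - u_{i+1}` for `1 ≤ i ≤ n-q-1`. -/
def YU (q k n d : ℕ) : Set ((ℕ → ℤ) × (ℕ → ℤ)) :=
  { p | IsPartE (n - q) p.1 ∧ IsPart (n - q) p.2 ∧
    psize (n - q) p.1 ≤ (d : ℤ) * (2 * (k : ℤ) - (q : ℤ)) - 2 ∧
    (d : ℤ) * (2 * (k : ℤ) - (q : ℤ) - 2) ≤ psize (n - q) p.1 - 2 * p.1 1 ∧
    (∀ i, Even (p.2 i)) ∧ p.2 1 = (q : ℤ) ∧
    (∀ i, 1 ≤ i → i ≤ n - q - 1 → p.2 i - p.2 (i + 1) ≤ p.1 i - p.1 (i + 1)) }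

/-- The function `g_{q,k,n,d}` (which depends only on `q` and `n`):
`g(y,u) = |y|/2 + |u|/2 + q(y₁-1)/2 - Σ_{i=1}^{n-q-1} (u_{i+1}/2)((y_i-y_{i+1})-(u_i-u_{i+1}))`. -/
def gfun (q n : ℕ) (p : (ℕ → ℤ) × (ℕ → ℤ)) : ℚ :=
  (psize (n - q) p.1 : ℚ) / 2 + (psize (n - q) p.2 : ℚ) / 2
    + (q : ℚ) * ((p.1 1 : ℚ) - 1) / 2
    - ∑ i ∈ Finset.Icc 1 (n - q - 1),
        ((p.2 (i + 1) : ℚ) / 2) *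
          (((p.1 i : ℚ) - (p.1 (i + 1) : ℚ)) - ((p.2 i : ℚ) - (p.2 (i + 1) : ℚ)))


/-- `z^{(2)}`: the sequence `(z₁,z₁,z₂,z₂,…)`, so `(z^{(2)})_j = z_{⌈j/2⌉}`,
regarded as a sequence of length `n` (padded with a final zero when `n` is odd,
which is automatic since `z i = 0` for `i > m`). -/
def zdub (z : ℕ → ℤ) (j : ℕ) : ℤ := z ((j + 1) / 2)

/-- The set `𝒯_l(z)` of sequences `t = (t₁,…,t_{n-2l})` with `t₁ = l`,
`t₁ ≥ t₂ ≥ ⋯ ≥ t_{n-2l} ≥ 0`, and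
`z^{(2)}_{2l+i} - z^{(2)}_{2l+i+1} ≥ 2t_i - 2t_{i+1}` for `1 ≤ i ≤ n-2l-1`
(encoded with `t i = 0` for `i = 0` and `i > n-2l`). -/
def Tset (n l : ℕ) (z : ℕ → ℤ) : Set (ℕ → ℤ) :=
  { t | t 1 = (l : ℤ) ∧
    (∀ i, 1 ≤ i → i < n - 2 * l → t (i + 1) ≤ t i) ∧
    (∀ i, 1 ≤ i → i ≤ n - 2 * l → 0 ≤ t i) ∧
    (∀ i, i = 0 ∨ n - 2 * l < i → t i = 0) ∧
    (∀ i, 1 ≤ i → i ≤ n - 2 * l - 1 →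
      2 * t i - 2 * t (i + 1) ≤ zdub z (2 * l + i) - zdub z (2 * l + i + 1)) }

/-- `|t| = t₁ + ⋯ + t_{n-2l}`. -/
def tsize (n l : ℕ) (t : ℕ → ℤ) : ℤ := ∑ i ∈ Finset.Icc 1 (n - 2 * l), t i

/-- `f_l(z,t) = Σ_{i=1}^{n-2l-1} t_{i+1}((z^{(2)}_{2l+i} - z^{(2)}_{2l+i+1}) - (2t_i - 2t_{i+1}))`. -/
def ffun (n l : ℕ) (z t : ℕ → ℤ) : ℤ :=
  ∑ i ∈ Finset.Icc 1 (n - 2 * l - 1),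
    t (i + 1) * ((zdub z (2 * l + i) - zdub z (2 * l + i + 1)) - (2 * t i - 2 * t (i + 1)))


/-- The set `𝒵_k^d` indexing the subquotients of `S/I_{2k}^d`: pairs `(z,l)` with
`z ∈ P(m)`, `0 ≤ l ≤ k-1`, `z₁ = ⋯ = z_{l+1} ≤ d-1`, and
`|z| + (d-z₁)l + 1 ≤ kd ≤ |z| + (d-z₁)(l+1)`. -/
def Zkd (m k d : ℕ) : Set ((ℕ → ℤ) × ℕ) :=
  { w | IsPart m w.1 ∧ w.2 < k ∧
    (∀ i, 1 ≤ i → i ≤ w.2 + 1 → w.1 i = w.1 1) ∧ w.1 1 ≤ (d : ℤ) - 1 ∧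
    psize m w.1 + ((d : ℤ) - w.1 1) * (w.2 : ℤ) + 1 ≤ (k : ℤ) * (d : ℤ) ∧
    (k : ℤ) * (d : ℤ) ≤ psize m w.1 + ((d : ℤ) - w.1 1) * ((w.2 : ℤ) + 1) }


lemma aux_dub (z : ℕ → ℤ) (l p : ℕ) :
    ∑ i ∈ Finset.Icc 1 (2 * p), (if i = 0 then 0 else z (l + (i + 1) / 2)) =
      2 * ∑ i ∈ Finset.Icc (l + 1) (l + p), z i := by
  induction p with
  | zero => simp
  | succ p ih =>
    rw [show 2 * (p + 1) = 2 * p + 1 + 1 by ring, Finset.sum_Icc_succ_top (by omega),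
      Finset.sum_Icc_succ_top (by omega), ih, ← add_assoc l p 1,
      Finset.sum_Icc_succ_top (by omega)]
    have e1 : l + (2 * p + 1 + 1) / 2 = l + p + 1 := by omega
    have e2 : l + (2 * p + 1 + 1 + 1) / 2 = l + p + 1 := by omega
    rw [if_neg (by omega), if_neg (by omega), e1, e2]
    ring

lemma aux_split (z : ℕ → ℤ) (l p : ℕ) :
    ∑ i ∈ Finset.Icc 1 (l + p), z i =
      ∑ i ∈ Finset.Icc 1 l, z i + ∑ i ∈ Finset.Icc (l + 1) (l + p), z i := by
  induction p with
  | zero => simp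
  | succ p ih =>
    rw [← add_assoc l p 1, Finset.sum_Icc_succ_top (by omega),
      Finset.sum_Icc_succ_top (by omega), ih]
    ring

/-- Lemma 5.9: the correspondence `(z,t) ↦ (y,u)`, where
`y = (z_{l+1}, z_{l+1}, z_{l+2}, z_{l+2}, …)` (of length `n - 2l`, padded by a final
zero when `n` is odd) and `u = 2t`, satisfies:
`(z,l) ∈ 𝒵_k^d` and `t ∈ 𝒯_l(z)` if and only if `(y,u) ∈ 𝒴𝒰(2l,k,n,d)`; and in
that case `g_{2l,k,n,d}(y,u) = Σ_{i=l+1}^m z_i + l(z₁-1) + |t| - f_l(z,t)`. -/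
theorem Zkd_YU_equiv (n m k d l : ℕ) (z t : ℕ → ℤ) (h2 : 2 ≤ n) (hm : m = n / 2)
    (hk1 : 1 ≤ k) (hkm : k ≤ m) (hd : 1 ≤ d) (hl : l < k)
    (hz : IsPart m z) (hzc : ∀ i, 1 ≤ i → i ≤ l + 1 → z i = z 1) :
    (((z, l) ∈ Zkd m k d ∧ t ∈ Tset n l z) ↔
      ((fun i => if i = 0 then 0 else z (l + (i + 1) / 2)), (fun i => 2 * t i)) ∈
        YU (2 * l) k n d) ∧
    (((z, l) ∈ Zkd m k d ∧ t ∈ Tset n l z) →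
      gfun (2 * l) n
          ((fun i => if i = 0 then 0 else z (l + (i + 1) / 2)), (fun i => 2 * t i)) =
        (((∑ i ∈ Finset.Icc (l + 1) m, z i) + (l : ℤ) * (z 1 - 1)
            + tsize n l t - ffun n l z t : ℤ) : ℚ)) := by
  have hS : ∑ i ∈ Finset.Icc 1 (n - 2 * l), (if i = 0 then 0 else z (l + (i + 1) / 2)) =
      2 * ∑ i ∈ Finset.Icc (l + 1) m, z i := by
    have h := aux_dub z l (m - l)
    rw [show l + (m - l) = m by omega] at h
    rw [← h]
    rcases Nat.even_or_odd' n with ⟨c, hc | hc⟩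
    · rw [show n - 2 * l = 2 * (m - l) by omega]
    · rw [show n - 2 * l = 2 * (m - l) + 1 by omega, Finset.sum_Icc_succ_top (by omega),
        if_neg (by omega), hz.2.2 _ (Or.inr (by omega)), add_zero]
  have hP : psize m z = l * z 1 + ∑ i ∈ Finset.Icc (l + 1) m, z i := by
    have h := aux_split z l (m - l)
    rw [show l + (m - l) = m by omega] at h
    have h' : ∑ i ∈ Finset.Icc 1 l, z i = l * z 1 := by
      rw [Finset.sum_congr rfl (g := fun _ => z 1)]
      · simp
      · intro i hi
        rw [Finset.mem_Icc] at hi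
        exact hzc i hi.1 (by omega)
    rw [psize, h, h']
  have hzl : z (l + 1) = z 1 := hzc _ (by omega) le_rfl
  have hdub : ∀ i, zdub z (2 * l + i) = z (l + (i + 1) / 2) := by
    intro i
    unfold zdub
    congr 1
    omega
  have hdub' : ∀ i, zdub z (2 * l + i + 1) = z (l + (i + 1 + 1) / 2) := by
    intro i
    rw [add_assoc, hdub]
  have hE : IsPartE (n - 2 * l) (fun i => if i = 0 then 0 else z (l + (i + 1) / 2)) := by
    refine ⟨⟨?_, ?_, ?_⟩, ?_, ?_⟩
    · intro i h1 h2'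
      simp only [if_neg (show i ≠ 0 by omega), if_neg (show i + 1 ≠ 0 by omega)]
      rcases Nat.even_or_odd' i with ⟨c, hc | hc⟩
      · rw [show l + (i + 1 + 1) / 2 = l + c + 1 by omega, show l + (i + 1) / 2 = l + c by omega]
        by_cases hcm : l + c < m
        · exact hz.1 _ (by omega) hcm
        · rw [hz.2.2 (l + c + 1) (Or.inr (by omega))]
          exact hz.2.1 _ (by omega) (by omega)
      · rw [show l + (i + 1 + 1) / 2 = l + (i + 1) / 2 by omega]
    · intro i h1 h2'
      simp only [if_neg (show i ≠ 0 by omega)]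
      by_cases hcm : l + (i + 1) / 2 ≤ m
      · exact hz.2.1 _ (by omega) hcm
      · rw [hz.2.2 _ (Or.inr (by omega))]
    · intro i hi
      by_cases h0 : i = 0
      · simp [h0]
      · simp only [if_neg h0]
        exact hz.2.2 _ (Or.inr (by omega))
    · intro i h1 h2'
      simp only [if_neg (show 2 * i ≠ 0 by omega), if_neg (show 2 * i - 1 ≠ 0 by omega)]
      congr 1
      omega
    · rintro ⟨c, hc⟩
      simp only [if_neg (show n - 2 * l ≠ 0 by omega)]
      exact hz.2.2 _ (Or.inr (by omega))
  refine ⟨⟨?_, ?_⟩, ?_⟩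
  · rintro ⟨⟨-, -, -, a1, a2, a3⟩, b1, b2, b3, b4, b5⟩
    simp only at a1 a2 a3
    refine ⟨hE, ⟨?_, ?_, ?_⟩, ?_, ?_, ?_, ?_, ?_⟩
    · intro i h1 h2'
      have := b2 i h1 h2'
      simp only
      omega
    · intro i h1 h2'
      have := b3 i h1 h2'
      simp only
      omega
    · intro i hi
      simp only [b4 i hi, mul_zero]
    · simp only [psize]
      rw [hS]
      push_cast
      nlinarith
    · simp only [psize]
      rw [hS]
      simp [hzl]
      nlinarith
    · intro i
      exact even_two_mul _
    · simp [b1]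
    · intro i h1 h2'
      have := b5 i h1 h2'
      rw [hdub, hdub'] at this
      simpa only [if_neg (show i ≠ 0 by omega), if_neg (show i + 1 ≠ 0 by omega)] using this
  · rintro ⟨-, ⟨a1, a2, a3⟩, b1, b2, -, b3, b4⟩
    simp only [psize] at b1 b2
    rw [hS] at b1 b2
    simp [hzl] at b2 b3
    push_cast at b1
    refine ⟨⟨hz, hl, hzc, ?_, ?_, ?_⟩, ?_, ?_, ?_, ?_, ?_⟩
    · simp only
      nlinarith
    · simp only
      nlinarith
    · simp only
      nlinarith
    · exact b3
    · intro i h1 h2'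
      have := a1 i h1 h2'
      simp only at this
      omega
    · intro i h1 h2'
      have := a2 i h1 h2'
      simp only at this
      omega
    · intro i hi
      have := a3 i hi
      simp only at this
      omega
    · intro i h1 h2'
      have := b4 i h1 h2'
      rw [hdub, hdub']
      simpa only [if_neg (show i ≠ 0 by omega), if_neg (show i + 1 ≠ 0 by omega)] using this
  · intro _
    have hF : ∑ i ∈ Finset.Icc 1 (n - 2 * l - 1),
        ((((2 * t (i + 1) : ℤ)) : ℚ) / 2) *
          (((((if i = 0 then 0 else z (l + (i + 1) / 2)) : ℤ) : ℚ) -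
            (((if i + 1 = 0 then 0 else z (l + (i + 1 + 1) / 2)) : ℤ) : ℚ)) -
            (((2 * t i : ℤ) : ℚ) - ((2 * t (i + 1) : ℤ) : ℚ))) = (ffun n l z t : ℚ) := by
      unfold ffun
      rw [Int.cast_sum]
      refine Finset.sum_congr rfl ?_
      intro i hi
      rw [Finset.mem_Icc] at hi
      rw [hdub, hdub', if_neg (show i ≠ 0 by omega), if_neg (show i + 1 ≠ 0 by omega)]
      push_cast
      ring
    have hT : psize (n - 2 * l) (fun i => 2 * t i) = 2 * tsize n l t := by
      simp only [psize, tsize, Finset.mul_sum]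
    have hY : psize (n - 2 * l) (fun i => if i = 0 then 0 else z (l + (i + 1) / 2)) =
      2 * ∑ i ∈ Finset.Icc (l + 1) m, z i := hS
    unfold gfun
    simp only
    rw [hF, hT, hY, if_neg one_ne_zero, show l + (1 + 1) / 2 = l + 1 by omega, hzl]
    push_cast
    ring
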